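/- Let (X_i)_{i≥1} be i.i.d. standard normal, X_{(n)} = max_{1≤i≤n} X_i, and Y_n = a_n(X_{(n)} - b_n) with a_n = √(2 log n) and b_n = √(2 log n) - (log log n + log(4π))/(2√(2 log n)). Then the W₁ Wasserstein distance between the law of Y_n and the standard Gumbel distribution Λ satisfies W₁(L(Y_n), Λ) = ((log log n)²/(16 log n))(1 + o(1)) as n → ∞. -/

import Mathlib

open MeasureTheory Filter Real

/-- The standard normal cumulative distribution function. -/
noncomputable def stdNormalCDF (x : ℝ) : ℝ :=
  ∫ t in Set.Iic x, Real.exp (-t ^ 2 / 2) / Real.sqrt (2 * Real.pi)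

/-- The standard normal density. -/
noncomputable def stdNormalPDF (x : ℝ) : ℝ :=
  Real.exp (-x ^ 2 / 2) / Real.sqrt (2 * Real.pi)

/-- Scaling constant `a_n = √(2 log n)`. -/
noncomputable def aSeq (n : ℕ) : ℝ := Real.sqrt (2 * Real.log n)

/-- Centering constant
`b_n = √(2 log n) - (log log n + log (4π)) / (2 √(2 log n))`. -/
noncomputable def bSeq (n : ℕ) : ℝ :=
  aSeq n - (Real.log (Real.log n) + Real.log (4 * Real.pi)) / (2 * aSeq n)

/-- `c_n = log (√(4 π log n))`. -/
noncomputable def cSeq (n : ℕ) : ℝ := Real.log (Real.sqrt (4 * Real.pi * Real.log n))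

/-- The CDF of `Y_n = a_n (X_{(n)} - b_n)` where `X_{(n)}` is the maximum of `n`
i.i.d. standard normal random variables: `P(Y_n ≤ x) = Φ(b_n + x/a_n)^n`. -/
noncomputable def Fmax (n : ℕ) (x : ℝ) : ℝ := stdNormalCDF (bSeq n + x / aSeq n) ^ n

/-- The density of `Y_n = a_n (X_{(n)} - b_n)`:
`f_n(x) = n a_n⁻¹ φ(b_n + x/a_n) Φ(b_n + x/a_n)^{n-1}`. -/
noncomputable def fmax (n : ℕ) (x : ℝ) : ℝ :=
  n * (aSeq n)⁻¹ * stdNormalPDF (bSeq n + x / aSeq n) *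
    stdNormalCDF (bSeq n + x / aSeq n) ^ (n - 1)

/-- The density of the standard Gumbel distribution. -/
noncomputable def gumbelPDF (x : ℝ) : ℝ := Real.exp (-x - Real.exp (-x))


noncomputable def Qt (u : ℝ) : ℝ := ∫ t in Set.Ioi u, stdNormalPDF t

lemma pdf_eq : stdNormalPDF = fun t : ℝ => Real.exp (-(1/2) * t ^ 2) / Real.sqrt (2 * Real.pi) := by
  funext t
  unfold stdNormalPDF
  congr 2; ring

lemma pdf_int : Integrable stdNormalPDF := by
  rw [pdf_eq]
  exact (integrable_exp_neg_mul_sq (by norm_num : (0:ℝ) < 1/2)).div_const _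

lemma pdf_pos (x : ℝ) : 0 < stdNormalPDF x := by
  unfold stdNormalPDF; positivity

lemma pdf_total : ∫ t, stdNormalPDF t = 1 := by
  rw [pdf_eq, integral_div, integral_gaussian]
  rw [show Real.pi / (1/2) = 2 * Real.pi by ring]
  exact div_self (by positivity)

lemma cdf_eq (u : ℝ) : stdNormalCDF u = 1 - Qt u := by
  have h := integral_add_compl (measurableSet_Iic (a := u)) pdf_int
  rw [pdf_total, Set.compl_Iic] at h
  unfold Qt
  have : stdNormalCDF u = ∫ t in Set.Iic u, stdNormalPDF t := rfl
  linarith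

lemma cdf_neg (u : ℝ) : stdNormalCDF (-u) = Qt u := by
  have : stdNormalCDF (-u) = ∫ t in Set.Iic (-u), stdNormalPDF t := rfl
  rw [this, Qt, ← integral_comp_neg_Ioi]
  simp [stdNormalPDF]

lemma cdf_nonneg (u : ℝ) : 0 ≤ stdNormalCDF u := by
  unfold stdNormalCDF
  exact integral_nonneg fun t => by positivity

lemma Qt_nonneg (u : ℝ) : 0 ≤ Qt u := cdf_neg u ▸ cdf_nonneg _

lemma cdf_le_one (u : ℝ) : stdNormalCDF u ≤ 1 := by
  have := Qt_nonneg u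
  rw [cdf_eq]; linarith

lemma cdf_mono : Monotone stdNormalCDF := by
  intro u v h
  exact setIntegral_mono_set pdf_int.integrableOn
    (Eventually.of_forall fun t => (pdf_pos t).le) (Set.Iic_subset_Iic.2 h).eventuallyLE

lemma pdf_deriv (t : ℝ) : HasDerivAt stdNormalPDF (-t * stdNormalPDF t) t := by
  have h : HasDerivAt (fun t : ℝ => -t ^ 2 / 2) (-t) t := by
    have := ((hasDerivAt_pow 2 t).neg).div_const 2
    exact this.congr_deriv (by simp; ring)
  have := (h.exp).div_const (Real.sqrt (2 * Real.pi))
  exact this.congr_deriv (by unfold stdNormalPDF; ring)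

lemma pdf_tendsto : Tendsto stdNormalPDF atTop (nhds 0) := by
  unfold stdNormalPDF
  rw [show (0:ℝ) = 0 / Real.sqrt (2 * Real.pi) by simp]
  apply Tendsto.div_const
  apply Real.tendsto_exp_atBot.comp
  have : Tendsto (fun x:ℝ => x ^ 2 / 2) atTop atTop :=
    (tendsto_pow_atTop (by norm_num)).atTop_div_const (by norm_num)
  convert tendsto_neg_atTop_atBot.comp this using 1
  funext x; simp; ring

lemma mills_upper {u : ℝ} (hu : 0 < u) : Qt u ≤ stdNormalPDF u / u := by
  have hd : ∀ t ∈ Set.Ici u, HasDerivAt (fun t => - (stdNormalPDF t / t))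
      (stdNormalPDF t * (1 + 1 / t ^ 2)) t := by
    intro t ht
    have ht0 : 0 < t := lt_of_lt_of_le hu ht
    refine ((pdf_deriv t).div (hasDerivAt_id t) ht0.ne').neg.congr_deriv ?_
    simp only [id]
    field_simp
    ring
  have hpos : ∀ t ∈ Set.Ioi u, 0 ≤ stdNormalPDF t * (1 + 1 / t ^ 2) := by
    intro t ht
    have := pdf_pos t
    positivity
  have hlim : Tendsto (fun t => - (stdNormalPDF t / t)) atTop (nhds 0) := by
    have := (pdf_tendsto.mul tendsto_inv_atTop_zero).neg
    simpa [div_eq_mul_inv] using this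
  have hint := integrableOn_Ioi_deriv_of_nonneg' hd hpos hlim
  have hval := integral_Ioi_of_hasDerivAt_of_tendsto' hd hint hlim
  have : Qt u ≤ ∫ t in Set.Ioi u, stdNormalPDF t * (1 + 1 / t ^ 2) := by
    apply setIntegral_mono_on pdf_int.integrableOn hint measurableSet_Ioi
    intro t ht
    have := pdf_pos t
    have h2 : 0 ≤ 1 / t ^ 2 := by positivity
    nlinarith
  rw [hval] at this
  linarith

lemma mills_lower {u : ℝ} (hu : 0 < u) : stdNormalPDF u / u * (1 - 1 / u ^ 2) ≤ Qt u := by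
  have hd : ∀ t ∈ Set.Ici u, HasDerivAt (fun t => stdNormalPDF t * (t⁻¹) ^ 3 - stdNormalPDF t * t⁻¹)
      (stdNormalPDF t * (1 - 3 / t ^ 4)) t := by
    intro t ht
    have ht0 : 0 < t := lt_of_lt_of_le hu ht
    have hi := hasDerivAt_inv ht0.ne'
    refine (((pdf_deriv t).mul (hi.pow 3)).sub ((pdf_deriv t).mul hi)).congr_deriv ?_
    field_simp
    simp; field_simp; ring
  have hlim : Tendsto (fun t => stdNormalPDF t * (t⁻¹) ^ 3 - stdNormalPDF t * t⁻¹) atTop (nhds 0) := by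
    have := (pdf_tendsto.mul (tendsto_inv_atTop_zero.pow 3)).sub
      (pdf_tendsto.mul tendsto_inv_atTop_zero)
    simpa using this
  have hint : IntegrableOn (fun t => stdNormalPDF t * (1 - 3 / t ^ 4)) (Set.Ioi u) := by
    apply Integrable.mul_bdd (c := 1 + 3 / u ^ 4) pdf_int.integrableOn
    · apply Measurable.aestronglyMeasurable; fun_prop
    · filter_upwards [ae_restrict_mem measurableSet_Ioi] with t ht
      have ht' : u < t := ht
      have h1 : 3 / t ^ 4 ≤ 3 / u ^ 4 := by gcongr
      have h2 : 0 ≤ 3 / t ^ 4 := by positivity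
      rw [Real.norm_eq_abs, abs_le]
      constructor <;> linarith
  have hval := integral_Ioi_of_hasDerivAt_of_tendsto' hd hint hlim
  have : ∫ t in Set.Ioi u, stdNormalPDF t * (1 - 3 / t ^ 4) ≤ Qt u := by
    apply setIntegral_mono_on hint pdf_int.integrableOn measurableSet_Ioi
    intro t ht
    have := pdf_pos t
    have h2 : 0 ≤ 3 / t ^ 4 := by positivity
    nlinarith
  rw [hval] at this
  refine le_trans (le_of_eq ?_) this
  field_simp; ring

lemma pdf_le (u : ℝ) : stdNormalPDF u ≤ Real.exp (-u ^ 2 / 2) := by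
  unfold stdNormalPDF
  apply div_le_self (Real.exp_pos _).le
  rw [Real.one_le_sqrt]
  nlinarith [Real.pi_gt_three]

/-- far left bound -/
lemma cdf_far {v : ℝ} (hv : 1 ≤ v) : stdNormalCDF (-v) ≤ Real.exp (-v ^ 2 / 2) := by
  rw [cdf_neg]
  refine (mills_upper (by linarith)).trans ((div_le_self (pdf_pos v).le hv).trans (pdf_le v))

/-- comparison of `(1-q)^n` with `exp (-n q)` -/
lemma pow_exp {q : ℝ} (h0 : 0 ≤ q) (h1 : q ≤ 1) (n : ℕ) :
    (1 - q) ^ n ≤ Real.exp (-(n * q)) ∧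
    Real.exp (-(n * q)) - (1 - q) ^ n ≤ n * q ^ 2 * Real.exp (-(n * q)) := by
  have he : Real.exp (-(n * q)) = Real.exp (-q) ^ n := by
    rw [← Real.exp_nat_mul]; ring_nf
  constructor
  · rw [he]
    apply pow_le_pow_left₀ (by linarith)
    linarith [Real.add_one_le_exp (-q)]
  · have hb : 1 - n * q ^ 2 ≤ (1 - q ^ 2) ^ n := by
      have := one_add_mul_le_pow (a := - q ^ 2) (by nlinarith) n
      calc _ = 1 + n * (- q ^ 2) := by ring
        _ ≤ _ := this
        _ = _ := by ring
    have hc : Real.exp (-q) ^ n * (1 - q ^ 2) ^ n ≤ (1 - q) ^ n := by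
      rw [← mul_pow]
      apply pow_le_pow_left₀
      · have : 0 ≤ 1 - q ^ 2 := by nlinarith
        positivity
      · have h2 : Real.exp (-q) * (1 + q) ≤ 1 := by
          have := Real.add_one_le_exp q
          calc _ ≤ Real.exp (-q) * Real.exp q := by
                gcongr; linarith
            _ = 1 := by rw [← Real.exp_add]; simp
        calc Real.exp (-q) * (1 - q ^ 2) = (Real.exp (-q) * (1 + q)) * (1 - q) := by ring
          _ ≤ 1 * (1 - q) := by gcongr
          _ = _ := by ring
    rw [he]
    have hp : 0 ≤ Real.exp (-q) ^ n := by positivity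
    nlinarith [mul_le_mul_of_nonneg_left hb hp]

structure Good (n : ℕ) (L l c : ℝ) : Prop where
  hL : L = Real.log n
  hl : l = Real.log L
  hc : c = (l + Real.log (4 * Real.pi)) / 2
  l4 : 4 ≤ l
  l3 : l ^ 3 ≤ L
  clb : l / 2 ≤ c
  cub : c ≤ l / 2 + 2
  n16 : 16 * L ≤ n

lemma Good.L16 {n : ℕ} {L l c : ℝ} (h : Good n L l c) : 16 * l ≤ L := by
  have := h.l4
  have := h.l3
  nlinarith [mul_nonneg (show 0 ≤ l by linarith) (show 0 ≤ (l-4)*(l+4) by nlinarith)]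

lemma Good.csq {n : ℕ} {L l c : ℝ} (h : Good n L l c) : c ^ 2 ≤ L := by
  have h4 := h.l4
  have h3 := h.l3
  have h1 := h.cub
  have h2 := h.clb
  have : c ^ 2 ≤ l ^ 2 := pow_le_pow_left₀ (by linarith) (by linarith) 2
  nlinarith [mul_nonneg (sq_nonneg l) (show 0 ≤ l - 4 by linarith), sq_nonneg l]

lemma exp_quad {s : ℝ} (hs : 0 ≤ s) : Real.exp (-s) ≤ 1 - s + s ^ 2 / 2 := by
  have h := Real.quadratic_le_exp_of_nonneg hs
  rw [Real.exp_neg, inv_le_iff_one_le_mul₀ (Real.exp_pos s)]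
  have h2 : 0 ≤ 1 - s + s ^ 2 / 2 := by nlinarith [sq_nonneg (s - 1)]
  calc 1 ≤ (1 - s + s ^ 2 / 2) * (1 + s + s ^ 2 / 2) := by nlinarith [sq_nonneg (s ^ 2)]
    _ ≤ _ := by gcongr

set_option maxHeartbeats 2000000 in
lemma theta_est {n : ℕ} {L l c x θ : ℝ} (h : Good n L l c) (hx : -L / 2 ≤ x)
    (h1 : Real.exp (-((x - c) ^ 2 / (4 * L))) * (1 / (1 + (x - c) / (2 * L))) * (1 - 2 / L) ≤ θ)
    (h2 : θ ≤ Real.exp (-((x - c) ^ 2 / (4 * L))) * (1 / (1 + (x - c) / (2 * L)))) :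
    |θ - 1 + l ^ 2 / (16 * L)| ≤ 10 * (1 + x ^ 4) * l / L ∧ θ ≤ 2 := by
  have h4 := h.l4
  have h3 := h.l3
  have hcu := h.cub
  have hcl := h.clb
  have hL16 := h.L16
  have hL0 : 0 < L := by linarith
  have hl0 : 0 < l := by linarith
  set s := (x - c) ^ 2 / (4 * L) with hs
  set d := (x - c) / (2 * L) with hd
  have hs0 : 0 ≤ s := by positivity
  have hd0 : -(1/2) ≤ d := by
    rw [hd, le_div_iff₀ (by positivity)]; linarith
  set E := Real.exp (-s) with hE
  have hE0 : 0 < E := Real.exp_pos _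
  have hE1 : E ≤ 1 := by rw [hE, Real.exp_le_one_iff]; linarith
  have hEa : 1 - s ≤ E := by linarith [Real.add_one_le_exp (-s)]
  have hEb : E ≤ 1 - s + s ^ 2 / 2 := exp_quad hs0
  set M := 1 / (1 + d) with hM
  have hdp : 0 < 1 + d := by linarith
  have hM0 : 0 < M := by positivity
  have hM2 : M ≤ 2 := by
    rw [hM, div_le_iff₀ hdp]; linarith
  have hM1 : |M - 1| ≤ 2 * |d| := by
    have : M - 1 = -(M * d) := by rw [hM]; field_simp; ring
    rw [this, abs_neg, abs_mul, abs_of_pos hM0]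
    gcongr
  have hEM : E * M ≤ 2 := by nlinarith
  refine ⟨?_, h2.trans hEM⟩
  have hW0 : 0 ≤ x ^ 4 := by positivity
  have hxW : |x| ≤ 1 + x ^ 4 := by
    rw [abs_le]; constructor <;> nlinarith [sq_nonneg (x^2 - 1/2), sq_nonneg (x - 1/2), sq_nonneg (x + 1/2)]
  have hx2 : x ^ 2 ≤ 1 + x ^ 4 := by nlinarith [sq_nonneg (x^2 - 1/2)]
  -- pieces
  have p1 : 2 * |d| ≤ 2 * ((1 + x ^ 4) * l / L) := by
    have : |d| ≤ (1 + x ^ 4) * l / L := by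
      rw [hd, abs_div, abs_of_pos (show 0 < 2 * L by positivity), div_le_div_iff₀ (by positivity) hL0]
      have h5 : |x - c| ≤ |x| + c := by
        have := abs_sub x c
        rwa [abs_of_nonneg (show 0 ≤ c by linarith)] at this
      have h6 : |x - c| ≤ 2 * ((1 + x ^ 4) * l) := by nlinarith
      nlinarith
    linarith
  have p2 : E * M * (2 / L) ≤ (1 + x ^ 4) * l / L := by
    calc E * M * (2 / L) ≤ 2 * (2 / L) := by gcongr
      _ = 4 / L := by ring
      _ ≤ _ := by gcongr; nlinarith
  have p3 : s ^ 2 / 2 ≤ (1 + x ^ 4) * l / L := by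
    have hsl : s ≤ (x ^ 2 + l ^ 2) / (2 * L) := by
      rw [hs, div_le_div_iff₀ (by positivity) (by positivity)]
      have : (x - c) ^ 2 ≤ 2 * (x ^ 2 + l ^ 2) := by
        have : c ^ 2 ≤ l ^ 2 := pow_le_pow_left₀ (by linarith) (by linarith) 2
        nlinarith [sq_nonneg (x + c)]
      nlinarith
    calc s ^ 2 / 2 ≤ ((x ^ 2 + l ^ 2) / (2 * L)) ^ 2 / 2 := by gcongr
      _ = (x ^ 2 + l ^ 2) ^ 2 / (8 * L) / L := by field_simp; ring
      _ ≤ (1 + x ^ 4) * l / L := by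
        gcongr
        rw [div_le_iff₀ (by positivity)]
        have e1 : (x ^ 2 + l ^ 2) ^ 2 ≤ 2 * (x ^ 4 + l ^ 4) := by nlinarith [sq_nonneg (x ^ 2 - l ^ 2)]
        have e2 : l ^ 4 ≤ l * L := by
          calc l ^ 4 = l * l ^ 3 := by ring
            _ ≤ _ := by gcongr
        have e3 : x ^ 4 ≤ x ^ 4 * (l * L) := by
          apply le_mul_of_one_le_right hW0; nlinarith
        have e4 : 0 ≤ x ^ 4 * (l * L) := by positivity
        have e5 : 0 ≤ l * L := by positivity
        linarith
  have p4 : |s - l ^ 2 / (16 * L)| ≤ 2 * ((1 + x ^ 4) * l / L) := by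
    have : s - l ^ 2 / (16 * L) = (x ^ 2 - 2 * x * c + (c - l/2) * (c + l/2)) / (4 * L) := by
      rw [hs]; field_simp; ring
    rw [this, abs_div, abs_of_pos (show 0 < 4 * L by positivity), div_le_iff₀ (by positivity)]
    have e0 : 2 * ((1 + x ^ 4) * l / L) * (4 * L) = 8 * ((1 + x ^ 4) * l) := by field_simp; ring
    rw [e0]
    have e1 : |x| * c ≤ (1 + x ^ 4) * l := by
      apply mul_le_mul hxW (by linarith) (by linarith) (by linarith)
    have e2 : |x * c| = |x| * c := by rw [abs_mul, abs_of_nonneg (show 0 ≤ c by linarith)]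
    have e3 := abs_le.1 (le_of_eq e2)
    have e4 : 0 ≤ (c - l/2) * (c + l/2) := mul_nonneg (by linarith) (by linarith)
    have e5 : (c - l/2) * (c + l/2) ≤ 2 * (3/2 * l) :=
      mul_le_mul (by linarith) (by linarith) (by linarith) (by norm_num)
    have e6 : x ^ 2 ≤ (1 + x ^ 4) * l := by nlinarith
    have e7 : l ≤ (1 + x ^ 4) * l := by nlinarith
    have e8 := sq_nonneg x
    rw [abs_le]; constructor <;> linarith [e3.1, e3.2]
  have q1 := abs_le.1 hM1
  have q4 := abs_le.1 p4
  have q5 : E * (M - 1) ≤ 2 * |d| := by nlinarith [abs_nonneg d]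
  have q6 : -(2 * |d|) ≤ E * (M - 1) := by nlinarith [abs_nonneg d]
  have q7 : E * M * (1 - 2 / L) = E + E * (M - 1) - E * M * (2 / L) := by ring
  have q8 : E * M = E + E * (M - 1) := by ring
  have q9 : 10 * (1 + x ^ 4) * l / L = 10 * ((1 + x ^ 4) * l / L) := by ring
  have q10 : 0 ≤ (1 + x ^ 4) * l / L := by positivity
  rw [q9, abs_le]
  rw [q7] at h1
  constructor <;> nlinarith [q4.1, q4.2]

lemma u_eq {n : ℕ} {L l c : ℝ} (h : Good n L l c) (x : ℝ) :
    bSeq n + x / aSeq n = Real.sqrt (2 * L) * (1 + (x - c) / (2 * L)) := by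
  have hL16 := h.L16
  have h4 := h.l4
  have hL0 : 0 < L := by linarith
  have ha : aSeq n = Real.sqrt (2 * L) := by rw [aSeq, h.hL]
  have hs : 0 < Real.sqrt (2 * L) := by positivity
  have hq : Real.sqrt (2 * L) ^ 2 = 2 * L := Real.sq_sqrt (by positivity)
  unfold bSeq
  rw [ha, ← h.hL, ← h.hl]
  have : l + Real.log (4 * Real.pi) = 2 * c := by rw [h.hc]; ring
  rw [this]
  generalize Real.sqrt (2 * L) = a at *
  rw [← hq]
  field_simp
  ring

lemma p_bounds {n : ℕ} {L l c x : ℝ} (h : Good n L l c) (hx : -L / 2 ≤ x) :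
    Real.exp (-((x - c) ^ 2 / (4 * L))) * (1 / (1 + (x - c) / (2 * L))) * (1 - 2 / L)
      ≤ Real.exp x * (n * Qt (bSeq n + x / aSeq n)) ∧
    Real.exp x * (n * Qt (bSeq n + x / aSeq n)) ≤
      Real.exp (-((x - c) ^ 2 / (4 * L))) * (1 / (1 + (x - c) / (2 * L))) := by
  have hL16 := h.L16
  have h4 := h.l4
  have hcu := h.cub
  have hcl := h.clb
  have hL0 : 0 < L := by linarith
  have hn : 0 < (n:ℝ) := by linarith [h.n16]
  rw [u_eq h]
  set d := (x - c) / (2 * L) with hd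
  have hd0 : -(1/2) ≤ d := by
    rw [hd, le_div_iff₀ (by positivity)]; linarith
  have hdp : 0 < 1 + d := by linarith
  set a := Real.sqrt (2 * L) with ha
  have ha0 : 0 < a := by positivity
  have ha2 : a ^ 2 = 2 * L := Real.sq_sqrt (by positivity)
  have hu0 : 0 < a * (1 + d) := by positivity
  have key : Real.exp x * (n * (stdNormalPDF (a * (1 + d)) / (a * (1 + d)))) =
      Real.exp (-((x - c) ^ 2 / (4 * L))) * (1 / (1 + d)) := by
    have hnexp : (n:ℝ) = Real.exp L := by rw [h.hL, Real.exp_log hn]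
    have hcexp : Real.sqrt (2 * Real.pi) * a = Real.exp c := by
      rw [ha, ← Real.sqrt_mul (by positivity), Real.sqrt_eq_iff_mul_self_eq (by positivity) (by positivity),
        ← Real.exp_add]
      rw [show c + c = l + Real.log (4 * Real.pi) by rw [h.hc]; ring, Real.exp_add,
        Real.exp_log (by positivity), h.hl, Real.exp_log hL0]
      ring
    have : stdNormalPDF (a * (1 + d)) / (a * (1 + d)) =
        Real.exp (-(a * (1 + d)) ^ 2 / 2) / Real.exp c * (1 / (1 + d)) := by
      unfold stdNormalPDF
      rw [← hcexp]
      field_simp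
    rw [this, hnexp, ← Real.exp_sub]
    rw [← mul_assoc, ← mul_assoc, ← Real.exp_add, ← Real.exp_add]
    congr 2
    rw [mul_pow, ha2, hd]
    field_simp
    ring
  have hu2 : 1 / (a * (1 + d)) ^ 2 ≤ 2 / L := by
    rw [div_le_div_iff₀ (by positivity) hL0, mul_pow, ha2]
    have : 1 / 4 ≤ (1 + d) ^ 2 := by nlinarith
    nlinarith
  rw [← key]
  have hpp := pdf_pos (a * (1 + d))
  constructor
  · refine le_trans ?_ (mul_le_mul_of_nonneg_left (mul_le_mul_of_nonneg_left (mills_lower hu0) hn.le)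
      (Real.exp_pos x).le)
    rw [mul_assoc, mul_assoc (n:ℝ)]
    gcongr
  · gcongr
    exact mills_upper hu0

lemma exp_neg_diff {p g D : ℝ} (hp : Real.exp (-p) ≤ D) (hg : Real.exp (-g) ≤ D) :
    |Real.exp (-p) - Real.exp (-g)| ≤ |p - g| * D := by
  have key : ∀ a b : ℝ, Real.exp (-a) ≤ D → Real.exp (-a) - Real.exp (-b) ≤ |a - b| * D := by
    intro a b ha
    have h1 := Real.add_one_le_exp (a - b)
    have h2 : Real.exp (-b) = Real.exp (-a) * Real.exp (a - b) := by
      rw [← Real.exp_add]; ring_nf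
    have h3 : Real.exp (-a) - Real.exp (-b) ≤ Real.exp (-a) * (-(a - b)) := by
      rw [h2]; nlinarith [Real.exp_pos (-a)]
    calc _ ≤ Real.exp (-a) * (-(a - b)) := h3
      _ ≤ Real.exp (-a) * |a - b| := by
        gcongr; exact neg_le_abs _
      _ ≤ _ := by rw [mul_comm]; gcongr
  rw [abs_le]
  constructor
  · have := key g p hg
    rw [abs_sub_comm] at this
    linarith
  · exact key p g hp

lemma dexp_bound : ∃ C : ℝ, 1 ≤ C ∧ ∀ y : ℝ, 0 ≤ y →
    Real.exp (-((1/6) * Real.exp (y / 16))) ≤ C * Real.exp (-(3 * y)) := by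
  refine ⟨(Nat.factorial 48 : ℝ) * 6 ^ 48, ?_, ?_⟩
  · have : (1:ℝ) ≤ (Nat.factorial 48 : ℝ) := by exact_mod_cast Nat.one_le_iff_ne_zero.2 (Nat.factorial_ne_zero _)
    have h6 : (1:ℝ) ≤ 6 ^ 48 := by norm_num
    nlinarith
  · intro y hy
    set t := (1/6) * Real.exp (y / 16) with ht
    have ht0 : 0 < t := by positivity
    have h := Real.pow_div_factorial_le_exp t ht0.le 48
    have hf : (0:ℝ) < (Nat.factorial 48 : ℝ) := by exact_mod_cast Nat.factorial_pos _
    rw [Real.exp_neg, inv_le_iff_one_le_mul₀ (Real.exp_pos t)]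
    have h48 : t ^ 48 = (1/6) ^ 48 * Real.exp (3 * y) := by
      rw [ht, mul_pow, ← Real.exp_nat_mul]
      congr 2; push_cast; ring
    have e : (Nat.factorial 48 : ℝ) * 6 ^ 48 * Real.exp (-(3 * y)) * (t ^ 48 / (Nat.factorial 48 : ℝ)) = 1 := by
      rw [h48, Real.exp_neg, one_div, inv_pow]
      have := (Real.exp_pos (3 * y)).ne'
      generalize (Nat.factorial 48 : ℝ) = z at *
      field_simp
    rw [← e]
    gcongr

lemma W_bound (x : ℝ) : (1 + x ^ 4) * Real.exp (-|x|) ≤ 385 * Real.exp (-|x| / 2) := by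
  have h := Real.pow_div_factorial_le_exp (|x| / 2) (by positivity) 4
  have h1 : x ^ 4 = |x| ^ 4 := by rw [Even.pow_abs (by decide)]
  have h2 : 1 ≤ Real.exp (|x| / 2) := Real.one_le_exp (by positivity)
  have h3 : 1 + x ^ 4 ≤ 385 * Real.exp (|x| / 2) := by
    rw [h1]
    have : (|x| / 2) ^ 4 / (Nat.factorial 4 : ℝ) = |x| ^ 4 / 384 := by
      simp [Nat.factorial]; ring
    rw [this] at h
    linarith
  calc _ ≤ 385 * Real.exp (|x| / 2) * Real.exp (-|x|) := by gcongr
    _ = _ := by rw [mul_assoc, ← Real.exp_add]; ring_nf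

section
variable {n : ℕ} {L l c x : ℝ}

/-- central facts -/
lemma central (h : Good n L l c) (hx : -L / 2 ≤ x) :
    ∃ p : ℝ, 0 ≤ p ∧ p ≤ 2 * Real.exp (-x) ∧
      |p - Real.exp (-x) + Real.exp (-x) * (l ^ 2 / (16 * L))| ≤
        160 * (1 + x ^ 4) * Real.exp (-x) * (l ^ 2 / (16 * L)) / l ∧
      Fmax n x ≤ Real.exp (-p) ∧
      Real.exp (-p) - Fmax n x ≤ p ^ 2 * Real.exp (-p) / n ∧
      (x ≤ 0 → (1/6) * Real.exp (-x / 2) ≤ p) := by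
  have hb := p_bounds h hx
  have ht := theta_est h hx hb.1 hb.2
  have hL16 := h.L16
  have h4 := h.l4
  have hcl := h.clb
  have hL0 : 0 < L := by linarith
  have hl0 : 0 < l := by linarith
  have hn : 0 < (n:ℝ) := by linarith [h.n16]
  have hcs := h.csq
  set q := Qt (bSeq n + x / aSeq n) with hq
  have hq0 : 0 ≤ q := Qt_nonneg _
  have hF : Fmax n x = (1 - q) ^ n := by rw [Fmax, cdf_eq]
  have hq1 : q ≤ 1 := by
    have := cdf_nonneg (bSeq n + x / aSeq n)
    rw [cdf_eq] at this; linarith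
  have hpe := pow_exp hq0 hq1 n
  have hgx : Real.exp (-x) * Real.exp x = 1 := by rw [← Real.exp_add]; simp
  have hg0 := Real.exp_pos (-x)
  set p := n * q with hp
  have hpt : p = Real.exp (-x) * (Real.exp x * p) := by rw [← mul_assoc, hgx, one_mul]
  refine ⟨p, by positivity, ?_, ?_, ?_, ?_, ?_⟩
  · rw [hpt]; nlinarith [ht.2]
  · have : p - Real.exp (-x) + Real.exp (-x) * (l ^ 2 / (16 * L)) =
      Real.exp (-x) * (Real.exp x * p - 1 + l ^ 2 / (16 * L)) := by
      rw [mul_add, mul_sub, ← hpt, mul_one]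
    rw [this, abs_mul, abs_of_pos hg0]
    calc _ ≤ Real.exp (-x) * (10 * (1 + x ^ 4) * l / L) := by gcongr; exact ht.1
      _ = _ := by field_simp; ring
  · rw [hF]; exact hpe.1
  · rw [hF]
    refine hpe.2.trans (le_of_eq ?_)
    rw [hp]; field_simp
  · intro hx0
    have hM : 1 ≤ 1 / (1 + (x - c) / (2 * L)) := by
      have h5 : -(1/2) ≤ (x - c) / (2 * L) := by
        have := h.cub
        rw [le_div_iff₀ (by positivity)]; linarith
      have h6 : (x - c) / (2 * L) ≤ 0 := div_nonpos_of_nonpos_of_nonneg (by linarith) (by positivity)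
      rw [le_div_iff₀ (by linarith)]; linarith
    have hL2 : 1 / 2 ≤ 1 - 2 / L := by
      have : 2 / L ≤ 1 / 2 := by rw [div_le_div_iff₀ hL0 (by norm_num)]; linarith
      linarith
    have hs : (x - c) ^ 2 / (4 * L) ≤ -x / 2 + 1 := by
      rw [div_le_iff₀ (by positivity)]
      have : (x - c) ^ 2 ≤ 2 * x ^ 2 + 2 * c ^ 2 := by nlinarith [sq_nonneg (x + c)]
      nlinarith
    have hE : Real.exp (x / 2 - 1) ≤ Real.exp (-((x - c) ^ 2 / (4 * L))) := by
      apply Real.exp_le_exp.2; linarith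
    have h7 : Real.exp (x / 2 - 1) * 1 * (1/2) ≤ Real.exp x * p := by
      refine le_trans ?_ hb.1
      gcongr
    have h8 : Real.exp (-x) * Real.exp (x / 2 - 1) = Real.exp (-x / 2) * Real.exp (-1) := by
      rw [← Real.exp_add, ← Real.exp_add]; ring_nf
    have h9 : 1 / 3 ≤ Real.exp (-1) := by
      rw [Real.exp_neg, one_div]
      apply inv_anti₀ (Real.exp_pos 1)
      linarith [Real.exp_one_lt_d9]
    rw [hpt]
    have h10 := mul_le_mul_of_nonneg_left h7 hg0.le
    have h11 := Real.exp_pos (-x / 2)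
    nlinarith

lemma r_facts (h : Good n L l c) : 0 < l ^ 2 / (16 * L) ∧ 1 / (n:ℝ) ≤ l ^ 2 / (16 * L) / l ∧
    l ^ 2 / (16 * L) ≤ 1 / l ∧ 1 ≤ L * (l ^ 2 / (16 * L)) := by
  have hL16 := h.L16
  have h4 := h.l4
  have hL0 : 0 < L := by linarith
  have hl0 : 0 < l := by linarith
  have h3 := h.l3
  have hn := h.n16
  refine ⟨by positivity, ?_, ?_, ?_⟩
  · calc 1 / (n:ℝ) ≤ 1 / (16 * L) := by gcongr
      _ ≤ l / (16 * L) := by gcongr; linarith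
      _ = _ := by field_simp
  · rw [div_le_div_iff₀ (by positivity) hl0]; nlinarith
  · have : L * (l ^ 2 / (16 * L)) = l ^ 2 / 16 := by field_simp
    rw [this]; nlinarith

lemma Fmax_nonneg (n : ℕ) (x : ℝ) : 0 ≤ Fmax n x := pow_nonneg (cdf_nonneg _) _

lemma z_bound (h : Good n L l c) {p : ℝ}
    (hz : |p - Real.exp (-x) + Real.exp (-x) * (l ^ 2 / (16 * L))| ≤
        160 * (1 + x ^ 4) * Real.exp (-x) * (l ^ 2 / (16 * L)) / l) :
    |p - Real.exp (-x)| ≤ 41 * (1 + x ^ 4) * Real.exp (-x) * (l ^ 2 / (16 * L)) := by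
  have h4 := h.l4
  obtain ⟨hr, -⟩ := r_facts h
  generalize l ^ 2 / (16 * L) = r at *
  have hg := Real.exp_pos (-x)
  generalize Real.exp (-x) = g at *
  have hW : 0 ≤ x ^ 4 := by positivity
  have h1 : 160 * (1 + x ^ 4) * g * r / l ≤ 40 * ((1 + x ^ 4) * g * r) := by
    rw [div_le_iff₀ (by linarith)]
    have : 0 ≤ (1 + x ^ 4) * g * r := by positivity
    nlinarith
  have h2 : g * r ≤ (1 + x ^ 4) * g * r := by
    rw [mul_assoc]; apply le_mul_of_one_le_left (by positivity); linarith
  have h3 := abs_le.1 hz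
  have h5 : 0 ≤ g * r := by positivity
  rw [abs_le]; constructor <;> linarith [h3.1, h3.2]

lemma bound_center {C : ℝ} (hC1 : 1 ≤ C) (hC : ∀ y : ℝ, 0 ≤ y →
    Real.exp (-((1/6) * Real.exp (y / 16))) ≤ C * Real.exp (-(3 * y)))
    (h : Good n L l c) (hx : -L / 2 ≤ x) :
    |Fmax n x - Real.exp (-Real.exp (-x))| ≤
      45 * 385 * C * (l ^ 2 / (16 * L)) * Real.exp (-|x| / 2) := by
  obtain ⟨p, hp0, hp2, hz, hF1, hF2, hlow⟩ := central h hx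
  have hz' := z_bound h hz
  obtain ⟨hr, hnr, -, -⟩ := r_facts h
  have h4 := h.l4
  have hn : 0 < (n:ℝ) := by linarith [h.n16, h.L16]
  have hnr' : 1 / (n:ℝ) ≤ l ^ 2 / (16 * L) :=
    hnr.trans (div_le_self hr.le (by linarith))
  generalize l ^ 2 / (16 * L) = r at *
  have hg := Real.exp_pos (-x)
  have hD : ∃ D : ℝ, 0 ≤ D ∧ Real.exp (-p) ≤ D ∧ Real.exp (-Real.exp (-x)) ≤ D ∧
      D * Real.exp (-x) ≤ C * Real.exp (-|x|) ∧ D * Real.exp (-x) ^ 2 ≤ C * Real.exp (-|x|) := by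
    rcases le_total 0 x with h0 | h0
    · have hg1 : Real.exp (-x) ≤ 1 := Real.exp_le_one_iff.2 (by linarith)
      refine ⟨1, by norm_num, Real.exp_le_one_iff.2 (by linarith), Real.exp_le_one_iff.2 (by linarith), ?_, ?_⟩
      · rw [abs_of_nonneg h0]; nlinarith
      · rw [abs_of_nonneg h0]; nlinarith
    · have hh := hC (-x) (by linarith)
      have e16 : Real.exp (-x / 16) ≤ Real.exp (-x / 2) := Real.exp_le_exp.2 (by linarith)
      have e1 : Real.exp (-x / 2) ≤ Real.exp (-x) := Real.exp_le_exp.2 (by linarith)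
      refine ⟨C * Real.exp (-(3 * -x)), by positivity, le_trans ?_ hh, le_trans ?_ hh, ?_, ?_⟩
      · apply Real.exp_le_exp.2; linarith [hlow h0]
      · apply Real.exp_le_exp.2; linarith [Real.exp_pos (-x / 16)]
      · rw [abs_of_nonpos h0, mul_assoc, ← Real.exp_add]
        gcongr; linarith
      · rw [abs_of_nonpos h0, mul_assoc, ← Real.exp_nat_mul, ← Real.exp_add]
        gcongr; push_cast; linarith
  obtain ⟨D, hD0, hDp, hDg, hD1, hD2⟩ := hD
  have b1 := exp_neg_diff hDp hDg
  have b2 : p ^ 2 * Real.exp (-p) / n ≤ 4 * r * (C * Real.exp (-|x|)) := by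
    calc p ^ 2 * Real.exp (-p) / n ≤ (2 * Real.exp (-x)) ^ 2 * D / n := by gcongr
      _ = 4 * (D * Real.exp (-x) ^ 2) * (1 / n) := by ring
      _ ≤ 4 * (C * Real.exp (-|x|)) * r := by gcongr
      _ = _ := by ring
  have b3 : |p - Real.exp (-x)| * D ≤ 41 * (1 + x ^ 4) * r * (C * Real.exp (-|x|)) := by
    calc _ ≤ 41 * (1 + x ^ 4) * Real.exp (-x) * r * D := by gcongr
      _ = 41 * (1 + x ^ 4) * r * (D * Real.exp (-x)) := by ring
      _ ≤ _ := by gcongr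
  have b4 : |Fmax n x - Real.exp (-Real.exp (-x))| ≤
      41 * (1 + x ^ 4) * r * (C * Real.exp (-|x|)) + 4 * r * (C * Real.exp (-|x|)) := by
    have := abs_le.1 b1
    rw [abs_le]; constructor <;> linarith [this.1, this.2]
  refine b4.trans ?_
  have hW : 0 ≤ x ^ 4 := by positivity
  calc _ = r * C * ((45 + 41 * x ^ 4) * Real.exp (-|x|)) := by ring
    _ ≤ r * C * ((45 * (1 + x ^ 4)) * Real.exp (-|x|)) := by gcongr; linarith
    _ = 45 * r * C * ((1 + x ^ 4) * Real.exp (-|x|)) := by ring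
    _ ≤ 45 * r * C * (385 * Real.exp (-|x| / 2)) :=
      mul_le_mul_of_nonneg_left (W_bound x) (by positivity)
    _ = _ := by ring

lemma bound_left {C : ℝ} (hC1 : 1 ≤ C) (hC : ∀ y : ℝ, 0 ≤ y →
    Real.exp (-((1/6) * Real.exp (y / 16))) ≤ C * Real.exp (-(3 * y)))
    (h : Good n L l c) (hx : x ≤ -L / 2) :
    |Fmax n x - Real.exp (-Real.exp (-x))| ≤
      45 * 385 * C * (l ^ 2 / (16 * L)) * Real.exp (-|x| / 2) := by
  obtain ⟨hr, -, -, hLr⟩ := r_facts h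
  have h4 := h.l4
  have hL16 := h.L16
  have hn16 := h.n16
  have hL0 : 0 < L := by linarith
  have hn : 0 < (n:ℝ) := by linarith
  have hx0 : x ≤ 0 := by linarith
  have hh := hC (-x) (by linarith)
  have hΛ : Real.exp (-Real.exp (-x)) ≤ C * Real.exp (-(3 * -x)) := by
    refine le_trans ?_ hh
    have e1 : Real.exp (-x / 16) ≤ Real.exp (-x) := Real.exp_le_exp.2 (by linarith)
    apply Real.exp_le_exp.2; linarith [Real.exp_pos (-x / 16)]
  have hF : Fmax n x ≤ C * Real.exp (-(3 * -x)) := by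
    rcases le_total x (-4 * L) with hxx | hxx
    · set v := -(bSeq n + x / aSeq n) with hv
      have hu := u_eq h x
      have ha0 : 0 < Real.sqrt (2 * L) := by positivity
      have ha2 : Real.sqrt (2 * L) ^ 2 = 2 * L := Real.sq_sqrt (by positivity)
      have hvl : Real.sqrt (2 * L) * (-x / (4 * L)) ≤ v := by
        rw [hv, hu, ← mul_neg]
        gcongr
        have : -(1 + (x - c) / (2 * L)) = (-(2 * L) - x + c) / (2 * L) := by field_simp; ring
        rw [this, div_le_div_iff₀ (by positivity) (by positivity)]
        have := h.clb
        nlinarith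
      have hx1 : 1 ≤ -x / (4 * L) := by rw [le_div_iff₀ (by positivity)]; linarith
      have ha1 : 1 ≤ Real.sqrt (2 * L) := by rw [Real.one_le_sqrt]; linarith
      have hv1 : 1 ≤ v := le_trans (by nlinarith) hvl
      have hcf := cdf_far hv1
      have hv2 : x ^ 2 / (8 * L) ≤ v ^ 2 := by
        calc x ^ 2 / (8 * L) = (Real.sqrt (2 * L) * (-x / (4 * L))) ^ 2 := by
              rw [mul_pow, ha2]; field_simp; ring
          _ ≤ v ^ 2 := by gcongr
      have : Fmax n x ≤ Real.exp (-(3 * -x)) := by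
        calc Fmax n x = stdNormalCDF (-v) ^ n := by rw [hv, neg_neg, Fmax]
          _ ≤ Real.exp (-v ^ 2 / 2) ^ n := pow_le_pow_left₀ (cdf_nonneg _) hcf n
          _ = Real.exp (n * (-v ^ 2 / 2)) := by rw [Real.exp_nat_mul]
          _ ≤ Real.exp (-(3 * -x)) := by
            apply Real.exp_le_exp.2
            have e1 : 16 * L * (x ^ 2 / (8 * L)) ≤ n * v ^ 2 := by gcongr
            have e2 : 16 * L * (x ^ 2 / (8 * L)) = 2 * x ^ 2 := by field_simp; ring
            nlinarith
      refine this.trans ?_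
      exact le_mul_of_one_le_left (Real.exp_pos _).le hC1
    · obtain ⟨p, hp0, hp2, hz, hF1, hF2, hlow⟩ := central h (le_refl (-L / 2))
      have hmono : Fmax n x ≤ Fmax n (-L / 2) := by
        unfold Fmax
        apply pow_le_pow_left₀ (cdf_nonneg _)
        apply cdf_mono
        have : 0 ≤ aSeq n := Real.sqrt_nonneg _
        gcongr
      refine (hmono.trans hF1).trans (le_trans ?_ hh)
      have e1 : Real.exp (-x / 16) ≤ Real.exp (-(-L / 2) / 2) := Real.exp_le_exp.2 (by linarith)
      have := hlow (by linarith)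
      apply Real.exp_le_exp.2; linarith
  have hF0 := Fmax_nonneg n x
  have hΛ0 := Real.exp_pos (-Real.exp (-x))
  have b1 : |Fmax n x - Real.exp (-Real.exp (-x))| ≤ C * Real.exp (-(3 * -x)) := by
    rw [abs_le]; constructor <;> linarith
  refine b1.trans ?_
  rw [abs_of_nonpos hx0]
  set r := l ^ 2 / (16 * L) with hrdef
  have e1 : 1 ≤ 2 * Real.exp (-x) * r := by
    refine hLr.trans ?_
    gcongr
    linarith [Real.add_one_le_exp (-x)]
  calc C * Real.exp (-(3 * -x)) ≤ C * Real.exp (-(3 * -x)) * (2 * Real.exp (-x) * r) := by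
        apply le_mul_of_one_le_right (by positivity) e1
    _ = 2 * C * r * (Real.exp (-(3 * -x)) * Real.exp (-x)) := by ring
    _ ≤ 45 * 385 * C * r * Real.exp (-(-x) / 2) := by
      rw [← Real.exp_add]
      gcongr
      · norm_num
      · linarith

lemma bound_pt (h : Good n L l c) (hx : -L / 2 ≤ x)
    (hl : 41 * (1 + x ^ 4) * Real.exp (-x) ≤ l) :
    |(Fmax n x - Real.exp (-Real.exp (-x))) / (l ^ 2 / (16 * L)) - gumbelPDF x| ≤
      (4 * Real.exp (-x) ^ 2 + (41 * (1 + x ^ 4) * Real.exp (-x)) ^ 2 +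
        160 * (1 + x ^ 4) * Real.exp (-x)) / l := by
  obtain ⟨p, hp0, hp2, hz, hF1, hF2, hlow⟩ := central h hx
  have hz' := z_bound h hz
  obtain ⟨hr, hnr, hrl, -⟩ := r_facts h
  have h4 := h.l4
  have hl0 : 0 < l := by linarith
  have hn : 0 < (n:ℝ) := by linarith [h.n16, h.L16]
  have hgum : gumbelPDF x = Real.exp (-x) * Real.exp (-Real.exp (-x)) := by
    rw [gumbelPDF, ← Real.exp_add]; ring_nf
  rw [hgum]
  generalize l ^ 2 / (16 * L) = r at *
  have hg := Real.exp_pos (-x)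
  generalize Real.exp (-x) = g at *
  set z := p - g with hzd
  set B := 41 * (1 + x ^ 4) * g with hB
  have hB0 : 0 ≤ B := by positivity
  have hz1 : |z| ≤ 1 := by
    refine hz'.trans ?_
    calc B * r ≤ l * (1 / l) := by gcongr
      _ = 1 := by field_simp
  have hq := Real.abs_exp_sub_one_sub_id_le (x := -z) (by rwa [abs_neg])
  have hzz : (-z) ^ 2 ≤ B ^ 2 * r / l := by
    calc (-z) ^ 2 = |z| ^ 2 := by rw [sq_abs]; ring
      _ ≤ (B * r) ^ 2 := by gcongr
      _ = B ^ 2 * r * r := by ring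
      _ ≤ B ^ 2 * r * (1 / l) := by gcongr
      _ = _ := by ring
  have hF3 : Real.exp (-p) - Fmax n x ≤ 4 * g ^ 2 * r / l := by
    refine hF2.trans ?_
    calc p ^ 2 * Real.exp (-p) / n ≤ (2 * g) ^ 2 * 1 / n := by
          gcongr
          exact Real.exp_le_one_iff.2 (by linarith)
      _ = 4 * g ^ 2 * (1 / n) := by ring
      _ ≤ 4 * g ^ 2 * (r / l) := by gcongr
      _ = _ := by ring
  have hep : Real.exp (-p) = Real.exp (-g) * Real.exp (-z) := by
    rw [← Real.exp_add, hzd]; ring_nf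
  have he0 := Real.exp_pos (-g)
  have he1 : Real.exp (-g) ≤ 1 := Real.exp_le_one_iff.2 (by linarith)
  set e := Real.exp (-g) with hee
  have main : |Fmax n x - e - r * (g * e)| ≤
      4 * g ^ 2 * r / l + B ^ 2 * r / l + 160 * (1 + x ^ 4) * g * r / l := by
    have t1 : Fmax n x - e - r * (g * e) = (Fmax n x - Real.exp (-p)) +
        e * (Real.exp (-z) - 1 - -z) - e * (z + g * r) := by rw [hep]; ring
    have t2 : |Fmax n x - Real.exp (-p)| ≤ 4 * g ^ 2 * r / l := by
      rw [abs_sub_comm, abs_of_nonneg (by linarith)]; exact hF3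
    have t3 : |e * (Real.exp (-z) - 1 - -z)| ≤ B ^ 2 * r / l := by
      rw [abs_mul, abs_of_pos he0]
      calc _ ≤ 1 * (-z) ^ 2 := by gcongr
        _ ≤ _ := by linarith
    have t4 : |e * (z + g * r)| ≤ 160 * (1 + x ^ 4) * g * r / l := by
      rw [abs_mul, abs_of_pos he0]
      calc _ ≤ 1 * (160 * (1 + x ^ 4) * g * r / l) := by gcongr
        _ = _ := by ring
    rw [t1]
    refine (abs_sub _ _).trans ?_
    have := abs_add_le (Fmax n x - Real.exp (-p)) (e * (Real.exp (-z) - 1 - -z))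
    linarith
  have : (Fmax n x - e) / r - g * e = (Fmax n x - e - r * (g * e)) / r := by field_simp
  rw [this, abs_div, abs_of_pos hr, div_le_iff₀ hr]
  refine main.trans (le_of_eq ?_)
  field_simp

end

lemma tL : Tendsto (fun n : ℕ => Real.log (n : ℝ)) atTop atTop :=
  Real.tendsto_log_atTop.comp tendsto_natCast_atTop_atTop

lemma tl : Tendsto (fun n : ℕ => Real.log (Real.log (n : ℝ))) atTop atTop :=
  Real.tendsto_log_atTop.comp tL

lemma eventually_good : ∀ᶠ n : ℕ in atTop, Good n (Real.log n) (Real.log (Real.log n))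
    ((Real.log (Real.log n) + Real.log (4 * Real.pi)) / 2) := by
  have h1 : ∀ᶠ y : ℝ in atTop, Real.log y ^ 3 ≤ y := by
    have := (isLittleO_pow_log_id_atTop (n := 3)).bound (show (0:ℝ) < 1 by norm_num)
    filter_upwards [this, eventually_ge_atTop 0] with y hy hy0
    simp only [id, Real.norm_eq_abs, one_mul, abs_of_nonneg hy0] at hy
    exact (le_abs_self _).trans hy
  have h2 : ∀ᶠ y : ℝ in atTop, 16 * Real.log y ≤ y := by
    have := (Real.isLittleO_log_id_atTop).bound (show (0:ℝ) < 1/16 by norm_num)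
    filter_upwards [this, eventually_ge_atTop 0] with y hy hy0
    simp only [id, Real.norm_eq_abs, abs_of_nonneg hy0] at hy
    linarith [le_abs_self (Real.log y)]
  have hp0 : 0 ≤ Real.log (4 * Real.pi) := Real.log_nonneg (by linarith [Real.pi_gt_three])
  have hp4 : Real.log (4 * Real.pi) ≤ 4 := by
    rw [Real.log_le_iff_le_exp (by positivity)]
    have := Real.add_one_le_exp (1:ℝ)
    have h4 : Real.exp 4 = Real.exp 1 ^ 4 := by rw [← Real.exp_nat_mul]; norm_num
    have : (2:ℝ) ^ 4 ≤ Real.exp 1 ^ 4 := by gcongr; linarith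
    rw [h4]
    linarith [Real.pi_le_four]
  filter_upwards [tL.eventually h1, tendsto_natCast_atTop_atTop.eventually h2,
    tl.eventually_ge_atTop 4] with n a1 a2 a3
  exact ⟨rfl, rfl, rfl, a3, a1, by linarith, by linarith, a2⟩

lemma integrable_exp_abs : Integrable (fun x : ℝ => Real.exp (-|x| / 2)) := by
  have h : IntegrableOn (fun x : ℝ => Real.exp (-(1/2) * |x|)) Set.univ := by
    rw [← Set.Iic_union_Ioi (a := (0:ℝ))]
    apply IntegrableOn.union
    · have := integrableOn_exp_mul_Iic (show (0:ℝ) < 1/2 by norm_num) 0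
      refine this.congr_fun (fun x hx => ?_) measurableSet_Iic
      simp only [abs_of_nonpos (show x ≤ 0 from hx)]
      ring_nf
    · have := integrableOn_exp_mul_Ioi (show -(1/2:ℝ) < 0 by norm_num) 0
      refine this.congr_fun (fun x hx => ?_) measurableSet_Ioi
      simp only [abs_of_pos (show 0 < x from hx)]
  rw [integrableOn_univ] at h
  refine h.congr (Eventually.of_forall fun x => ?_)
  simp only []
  ring_nf

lemma gumbel_deriv (x : ℝ) : HasDerivAt (fun x : ℝ => Real.exp (-Real.exp (-x))) (gumbelPDF x) x := by
  have h := ((hasDerivAt_neg x).exp).neg.exp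
  refine h.congr_deriv ?_
  rw [gumbelPDF, sub_eq_add_neg, Real.exp_add]
  simp; ring

lemma gumbel_total : ∫ x, gumbelPDF x = 1 := by
  have h0 : Tendsto (fun x : ℝ => Real.exp (-Real.exp (-x))) atBot (nhds 0) := by
    apply Real.tendsto_exp_atBot.comp
    apply tendsto_neg_atTop_atBot.comp
    exact Real.tendsto_exp_atTop.comp tendsto_neg_atBot_atTop
  have h1 : Tendsto (fun x : ℝ => Real.exp (-Real.exp (-x))) atTop (nhds 1) := by
    have := (Real.tendsto_exp_atBot.comp tendsto_neg_atTop_atBot).neg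
    have h2 := (Real.continuous_exp.tendsto _).comp this
    simpa [Function.comp_def] using h2
  have hpos : ∀ x, 0 ≤ gumbelPDF x := fun x => (Real.exp_pos _).le
  have hi : Integrable gumbelPDF := by
    refine integrable_exp_abs.mono' ?_ (Eventually.of_forall fun x => ?_)
    · apply Measurable.aestronglyMeasurable
      unfold gumbelPDF; fun_prop
    · rw [Real.norm_of_nonneg (hpos x), gumbelPDF]
      apply Real.exp_le_exp.2
      rcases le_total 0 x with h | h
      · rw [abs_of_nonneg h]; linarith [Real.exp_pos (-x)]
      · rw [abs_of_nonpos h]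
        have := Real.quadratic_le_exp_of_nonneg (show 0 ≤ -x by linarith)
        nlinarith [sq_nonneg (-x - 1)]
  rw [integral_of_hasDerivAt_of_tendsto gumbel_deriv hi h0 h1]
  norm_num

theorem w1_gumbel_max_gaussian :
    Tendsto (fun n : ℕ =>
        (∫ x : ℝ, |Fmax n x - Real.exp (-Real.exp (-x))|) /
          ((Real.log (Real.log n)) ^ 2 / (16 * Real.log n)))
      atTop (nhds 1) := by
  obtain ⟨C, hC1, hC⟩ := dexp_bound
  rw [← gumbel_total]
  simp_rw [← integral_div]
  apply tendsto_integral_filter_of_dominated_convergence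
    (fun x => 45 * 385 * C * Real.exp (-|x| / 2))
  · refine Eventually.of_forall fun n => Measurable.aestronglyMeasurable ?_
    have hm : Measurable (Fmax n) := by
      unfold Fmax
      exact (cdf_mono.measurable.comp (by fun_prop)).pow_const n
    have : Measurable (fun x : ℝ => Real.exp (-Real.exp (-x))) := by fun_prop
    have h2 : Measurable (fun x : ℝ => |Fmax n x - Real.exp (-Real.exp (-x))|) := by
      have := hm.sub this
      exact measurable_norm.comp this
    exact h2.div_const _
  · filter_upwards [eventually_good] with n hn
    refine Eventually.of_forall fun x => ?_
    have hr := (r_facts hn).1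
    rw [Real.norm_eq_abs, abs_div, abs_abs, abs_of_pos hr, div_le_iff₀ hr]
    rcases le_total (-Real.log n / 2) x with h | h
    · refine (bound_center hC1 hC hn h).trans (le_of_eq (by ring))
    · refine (bound_left hC1 hC hn h).trans (le_of_eq (by ring))
  · exact integrable_exp_abs.const_mul _
  · refine Eventually.of_forall fun x => ?_
    have key : Tendsto (fun n : ℕ => (Fmax n x - Real.exp (-Real.exp (-x))) /
        ((Real.log (Real.log n)) ^ 2 / (16 * Real.log n))) atTop (nhds (gumbelPDF x)) := by
      rw [tendsto_iff_norm_sub_tendsto_zero]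
      refine squeeze_zero' (Eventually.of_forall fun n => norm_nonneg _) ?_
        (tl.const_div_atTop (4 * Real.exp (-x) ^ 2 + (41 * (1 + x ^ 4) * Real.exp (-x)) ^ 2 +
        160 * (1 + x ^ 4) * Real.exp (-x)))
      filter_upwards [eventually_good, tL.eventually_ge_atTop (-2 * x),
        tl.eventually_ge_atTop (41 * (1 + x ^ 4) * Real.exp (-x))] with n hn a1 a2
      exact bound_pt hn (by linarith) a2
    have k2 := key.abs
    rw [abs_of_pos (show 0 < gumbelPDF x from Real.exp_pos _)] at k2
    refine k2.congr' ?_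
    filter_upwards [eventually_good] with n hn
    rw [abs_div, abs_of_pos (r_facts hn).1]
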